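/- Let κ = κ^{<κ} be uncountable, let γ ≤ κ⁺, and let θ₀, θ₁ > κ be regular cardinals. Then the challenger has a winning strategy in the filter game G_γ^{θ₀}(κ) if and only if he has one in G_γ^{θ₁}(κ); likewise for the judge. Hence the (strategic) γ-filter property does not depend on the choice of θ. -/

import Mathlib

universe u

open FirstOrder FirstOrder.Language ZFSet

/-- The relations of the language of set theory: a single binary relation `mem`. -/
inductive memRelType : ℕ → Type
  | mem : memRelType 2

/-- The first-order language of set theory, with a single binary relation `∈`. -/
def memLang : FirstOrder.Language :=
  ⟨fun _ => Empty, memRelType⟩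

/-- Any collection of ZFC sets is an `∈`-structure, via true membership. -/
instance zStruct (S : Set ZFSet.{u}) : memLang.Structure ↥S where
  funMap := fun f _ => f.elim
  RelMap := fun {n} r x =>
    match n, r, x with
    | _, memRelType.mem, x => (x 0 : ZFSet) ∈ (x 1 : ZFSet)

/-- The `i`-th (bound) variable as a term. -/
abbrev mvar {n : ℕ} (i : Fin n) : memLang.Term (Empty ⊕ Fin n) :=
  FirstOrder.Language.Term.var (Sum.inr i)

/-- The atomic membership formula `t ∈ u`. -/
def memF {n : ℕ} (t u : memLang.Term (Empty ⊕ Fin n)) : memLang.BoundedFormula Empty n :=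
  Relations.boundedFormula₂ memRelType.mem t u

/-- The axiom of extensionality. -/
def extAx : memLang.Sentence :=
  ∀' ∀' ((∀' ((memF (mvar 2) (mvar 0)) ⇔ (memF (mvar 2) (mvar 1)))) ⟹
    ((mvar 0) =' (mvar 1)))

/-- The empty set axiom. -/
def emptyAx : memLang.Sentence :=
  ∃' ∀' (∼ (memF (mvar 1) (mvar 0)))

/-- The pairing axiom. -/
def pairAx : memLang.Sentence :=
  ∀' ∀' ∃' ((memF (mvar 0) (mvar 2)) ⊓ (memF (mvar 1) (mvar 2)))

/-- The union axiom. -/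
def unionAx : memLang.Sentence :=
  ∀' ∃' ∀' ∀' (((memF (mvar 2) (mvar 3)) ⊓ (memF (mvar 3) (mvar 0))) ⟹
    (memF (mvar 2) (mvar 1)))

/-- The axiom of infinity. -/
def infAx : memLang.Sentence :=
  ∃' ((∃' ((memF (mvar 1) (mvar 0)) ⊓ ∀' (∼ (memF (mvar 2) (mvar 1))))) ⊓
    (∀' ((memF (mvar 1) (mvar 0)) ⟹
      ∃' ((memF (mvar 2) (mvar 0)) ⊓
        ∀' ((memF (mvar 3) (mvar 2)) ⇔
          ((memF (mvar 3) (mvar 1)) ⊔ ((mvar 3) =' (mvar 1))))))))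

/-- The foundation axiom. -/
def foundAx : memLang.Sentence :=
  ∀' ((∃' (memF (mvar 1) (mvar 0))) ⟹
    ∃' ((memF (mvar 1) (mvar 0)) ⊓
      ∀' (∼ ((memF (mvar 2) (mvar 0)) ⊓ (memF (mvar 2) (mvar 1))))))

/-- The axiom of choice, in the form: every family of nonempty pairwise disjoint sets
admits a selector. -/
def choiceAx : memLang.Sentence :=
  ∀' (((∀' ((memF (mvar 1) (mvar 0)) ⟹ ∃' (memF (mvar 2) (mvar 1)))) ⊓
      (∀' ∀' (((memF (mvar 1) (mvar 0)) ⊓ (memF (mvar 2) (mvar 0)) ⊓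
          (∼ ((mvar 1) =' (mvar 2)))) ⟹
        ∼ (∃' ((memF (mvar 3) (mvar 1)) ⊓ (memF (mvar 3) (mvar 2))))))) ⟹
    ∃' ∀' ((memF (mvar 2) (mvar 0)) ⟹
      ∃' ((memF (mvar 3) (mvar 2)) ⊓ (memF (mvar 3) (mvar 1)) ⊓
        ∀' (((memF (mvar 4) (mvar 2)) ⊓ (memF (mvar 4) (mvar 1))) ⟹
          ((mvar 4) =' (mvar 3))))))

/-- The separation axiom for the formula `φ(p₀,…,p_{n-1}, x)`. -/
def sepAx (n : ℕ) (φ : memLang.BoundedFormula Empty (n + 1)) : memLang.Sentence :=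
  (∀' (∃' (∀' ((memF (mvar ⟨n + 2, by omega⟩) (mvar ⟨n + 1, by omega⟩)) ⇔
    ((memF (mvar ⟨n + 2, by omega⟩) (mvar ⟨n, by omega⟩)) ⊓
      (φ.liftAt 2 n)))))).alls

/-- The collection axiom for the formula `φ(p₀,…,p_{n-1}, x, y)`. -/
def collAx (n : ℕ) (φ : memLang.BoundedFormula Empty (n + 2)) : memLang.Sentence :=
  (∀' ((∀' ((memF (mvar ⟨n + 1, by omega⟩) (mvar ⟨n, by omega⟩)) ⟹
        ∃' (φ.liftAt 1 n))) ⟹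
      (∃' (∀' ((memF (mvar ⟨n + 2, by omega⟩) (mvar ⟨n, by omega⟩)) ⟹
        ∃' ((memF (mvar ⟨n + 3, by omega⟩) (mvar ⟨n + 1, by omega⟩)) ⊓
          (φ.liftAt 2 n))))))).alls

/-- The power set axiom. -/
def powAx : memLang.Sentence :=
  ∀' ∃' ∀' ((∀' ((memF (mvar 3) (mvar 2)) ⟹ (memF (mvar 3) (mvar 0)))) ⟹
    (memF (mvar 2) (mvar 1)))

/-- The theory `ZFC⁻`: ZFC without the power set axiom, with collection. -/
def ZFCminus : memLang.Theory :=
  {extAx, emptyAx, pairAx, unionAx, infAx, foundAx, choiceAx} ∪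
    (⋃ n : ℕ, Set.range (sepAx n)) ∪ (⋃ n : ℕ, Set.range (collAx n))

/-- The theory `ZFC`. -/
def ZFCfull : memLang.Theory := insert powAx ZFCminus

/-- `S` is an elementary substructure of `T` with respect to the membership relation. -/
def ElemSub (S T : Set ZFSet.{u}) : Prop :=
  ∃ h : S ⊆ T, ∀ (n : ℕ) (φ : memLang.BoundedFormula Empty n) (x : Fin n → ↥S),
    φ.Realize Empty.elim x ↔
      φ.Realize Empty.elim (fun i => (⟨(x i : ZFSet), h (x i).2⟩ : ↥T))

/-- `j : S → T` is an elementary embedding of `∈`-structures. -/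
def ElemEmbOf (S T : Set ZFSet.{u}) (j : ↥S → ↥T) : Prop :=
  ∀ (n : ℕ) (φ : memLang.BoundedFormula Empty n) (x : Fin n → ↥S),
    φ.Realize Empty.elim x ↔ φ.Realize Empty.elim (j ∘ x)
/-- The cardinality of a ZFC set. -/
noncomputable def zcard (x : ZFSet.{u}) : Cardinal.{u + 1} := Cardinal.mk x.toSet

/-- `θ` is (the von Neumann representation of) a regular cardinal. -/
def IsRegCard (θ : ZFSet.{u}) : Prop :=
  θ.IsOrdinal ∧ (zcard θ).IsRegular ∧ ∀ x ∈ θ, zcard x < zcard θ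

/-- `κ` is (the von Neumann representation of) a cardinal. -/
def IsCardZ (κ : ZFSet.{u}) : Prop :=
  κ.IsOrdinal ∧ ∀ x ∈ κ, zcard x < zcard κ

/-- The collection `H(θ)` of sets hereditarily of cardinality less than `θ`. -/
def HZ (θ : ZFSet.{u}) : Set ZFSet.{u} :=
  {x | ZFSet.Hereditarily (fun y => zcard y < zcard θ) x}

/-- The collection `H(κ⁺)` of sets hereditarily of cardinality at most `κ`. -/
def Hplus (κ : ZFSet.{u}) : Set ZFSet.{u} :=
  {x | ZFSet.Hereditarily (fun y => zcard y ≤ zcard κ) x}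

/-- `f` codes a bijection from `a` onto `b`. -/
def IsBijZ (a b f : ZFSet.{u}) : Prop :=
  ZFSet.IsFunc a b f ∧ (∀ x₁ x₂ y, ZFSet.pair x₁ y ∈ f → ZFSet.pair x₂ y ∈ f → x₁ = x₂) ∧
    ∀ y ∈ b, ∃ x, ZFSet.pair x y ∈ f

/-- `f` codes an injection from `a` into `b`. -/
def IsInjZ (a b f : ZFSet.{u}) : Prop :=
  ZFSet.IsFunc a b f ∧ ∀ x₁ x₂ y, ZFSet.pair x₁ y ∈ f → ZFSet.pair x₂ y ∈ f → x₁ = x₂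

-- Part C : models
/-- A weak `κ`-model: a set `M` of size `κ` with `κ + 1 ⊆ M` satisfying `ZFC⁻`. -/
def WeakModelZ (κ : ZFSet.{u}) (M : Set ZFSet.{u}) : Prop :=
  Cardinal.mk ↥M = zcard κ ∧ insert κ κ.toSet ⊆ M ∧ (↥M ⊨ ZFCminus)

/-- `M` is closed under `<α`-sequences (of sets, with domains ordinals `< α`). -/
def LtClosed (α : ZFSet.{u}) (M : Set ZFSet.{u}) : Prop :=
  ∀ δ y f : ZFSet, δ ∈ α → y.toSet ⊆ M → ZFSet.IsFunc δ y f → f ∈ M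

/-- A `κ`-model: a weak `κ`-model closed under `<κ`-sequences. -/
def KappaModelZ (κ : ZFSet.{u}) (M : Set ZFSet.{u}) : Prop :=
  WeakModelZ κ M ∧ LtClosed κ M

/-- `j : S → T` has critical point `κ`. -/
def CritAt (S T : Set ZFSet.{u}) (j : ↥S → ↥T) (κ : ZFSet.{u}) : Prop :=
  ∃ hκ : κ ∈ S, (∀ x : ↥S, (x : ZFSet) ∈ κ → ((j x : ZFSet) = (x : ZFSet))) ∧
    (j ⟨κ, hκ⟩ : ZFSet) ≠ κ

/-- `j : S → T` is `κ`-powerset preserving: it has critical point `κ` and `S` and `T`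
have the same subsets of `κ`. -/
def PPres (κ : ZFSet.{u}) (S T : Set ZFSet.{u}) (j : ↥S → ↥T) : Prop :=
  CritAt S T j κ ∧ ∀ A : ZFSet, A ⊆ κ → (A ∈ S ↔ A ∈ T)

-- Part D : filters
/-- A filter on `κ` (in the sense of Holy–Schlicht): a collection of subsets of `κ` all of
whose finite intersections have cardinality `κ`. -/
def IsZFilter (κ : ZFSet.{u}) (F : Set ZFSet.{u}) : Prop :=
  (∀ A ∈ F, A ⊆ κ) ∧ ∀ (n : ℕ) (A : Fin n → ZFSet),
    (∀ i, A i ∈ F) → Cardinal.mk ↥(κ.toSet ∩ ⋂ i, (A i).toSet) = zcard κ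

/-- The diagonal intersection of a `κ`-sequence of subsets of `κ` coded by the
set-function `m`. -/
noncomputable def diagZ (κ m : ZFSet.{u}) : ZFSet.{u} :=
  ZFSet.sep (fun b => ∀ a v, a ∈ b → ZFSet.pair a v ∈ m → b ∈ v) κ

/-- `m` codes a `κ`-sequence of elements of `F`. -/
def CodesFilterSeq (κ : ZFSet.{u}) (F : Set ZFSet.{u}) (m : ZFSet.{u}) : Prop :=
  (∃ y, ZFSet.IsFunc κ y m) ∧ ∀ b v, b ∈ κ → ZFSet.pair b v ∈ m → v ∈ F

/-- `F` is an `M`-normal filter on `κ`: it measures `P(κ) ∩ M` and is closed under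
diagonal intersections of `κ`-sequences of its elements lying in `M`. -/
def MNormalZ (κ : ZFSet.{u}) (F : Set ZFSet.{u}) (M : Set ZFSet.{u}) : Prop :=
  IsZFilter κ F ∧ (∀ A : ZFSet, A ∈ M → A ⊆ κ → (A ∈ F ∨ (κ \ A) ∈ F)) ∧
    ∀ m ∈ M, CodesFilterSeq κ F m → diagZ κ m ∈ F

/-- `U` is weakly amenable for `M`: traces of `U` on `κ`-sized elements of `M` are in `M`. -/
def WeaklyAmenableZ (κ : ZFSet.{u}) (M : Set ZFSet.{u}) (U : Set ZFSet.{u}) : Prop :=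
  ∀ A : ZFSet, A ∈ M → zcard A ≤ zcard κ →
    ∃ B ∈ M, ∀ z : ZFSet, z ∈ B ↔ (z ∈ A ∧ z ∈ U)

/-- The domain of the ultrapower of `M` by a filter on `κ`: functions with domain `κ`
lying in `M`. -/
def UltFn (κ : ZFSet.{u}) (M : Set ZFSet.{u}) : Set ZFSet.{u} :=
  {f | f ∈ M ∧ ∃ y, ZFSet.IsFunc κ y f}

/-- The membership relation of the ultrapower of `M` by `U`. -/
noncomputable def UltMem (κ : ZFSet.{u}) (U : Set ZFSet.{u}) (f g : ZFSet.{u}) : Prop :=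
  ZFSet.sep (fun a => ∃ v w, ZFSet.pair a v ∈ f ∧ ZFSet.pair a w ∈ g ∧ v ∈ w) κ ∈ U

/-- The ultrapower of `M` by `U` is well-founded. -/
noncomputable def WellFoundedUlt (κ : ZFSet.{u}) (M : Set ZFSet.{u}) (U : Set ZFSet.{u}) : Prop :=
  WellFounded (fun f g : ↥(UltFn κ M) => UltMem κ U (f : ZFSet) (g : ZFSet))
-- Part E : the filter games G_γ^θ(κ)
/-- `m` codes the sequence `⟨g b | b ∈ d⟩` of `κ`-sized collections of sets. -/
def CodesSetSeq (m d : ZFSet.{u}) (g : ZFSet.{u} → Set ZFSet.{u}) : Prop :=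
  (∃ y, ZFSet.IsFunc d y m) ∧ ∀ b v, b ∈ d → ZFSet.pair b v ∈ m → v.toSet = g b

open Classical in
/-- The restriction of a play to the moves of index `< i`. -/
noncomputable def restrLt (g : ZFSet.{u} → Set ZFSet.{u}) (i : ZFSet.{u}) :
    ZFSet.{u} → Set ZFSet.{u} :=
  fun b => if b ∈ i then g b else ∅

open Classical in
/-- The restriction of a play to the moves of index `≤ i`. -/
noncomputable def restrLe (g : ZFSet.{u} → Set ZFSet.{u}) (i : ZFSet.{u}) :
    ZFSet.{u} → Set ZFSet.{u} :=
  fun b => if (b ∈ i ∨ b = i) then g b else ∅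

/-- The challenger's move at stage `i` of `G_γ^θ(κ)` is legal: he plays a `κ`-model
`M_i ≺ H(θ)` containing (codes for) the sequences of previous models and filter traces,
increasing the chain of models. -/
def ChalLegalAt (κ θ : ZFSet.{u}) (Ms Fs : ZFSet.{u} → Set ZFSet.{u}) (i : ZFSet.{u}) : Prop :=
  (∀ j, j ∈ i → Ms j ⊆ Ms i) ∧ KappaModelZ κ (Ms i) ∧ ElemSub (Ms i) (HZ θ) ∧
    (∃ m ∈ Ms i, CodesSetSeq m i Ms) ∧
    (∃ f ∈ Ms i, CodesSetSeq f i (fun b => Fs b ∩ Ms b))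

/-- The judge's move at stage `i` of `G_γ^θ(κ)` is legal: she plays a filter `F_i` on `κ`
measuring `P(κ) ∩ M_i` and extending her previous filters. -/
def JudgeLegalAt (κ : ZFSet.{u}) (Ms Fs : ZFSet.{u} → Set ZFSet.{u}) (i : ZFSet.{u}) : Prop :=
  IsZFilter κ (Fs i) ∧ (∀ A : ZFSet, A ∈ Ms i → A ⊆ κ → (A ∈ Fs i ∨ (κ \ A) ∈ Fs i)) ∧
    ∀ j, j ∈ i → Fs j ⊆ Fs i

/-- The winning condition for the judge in `G_γ^θ(κ)`: the union of the filters played is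
normal for the union of the models played. -/
def JudgeWinsRun (κ γ : ZFSet.{u}) (Ms Fs : ZFSet.{u} → Set ZFSet.{u}) : Prop :=
  MNormalZ κ (⋃ i ∈ γ.toSet, Fs i) (⋃ i ∈ γ.toSet, Ms i)

/-- `σ` is a winning strategy for the challenger in the game `G_γ^θ(κ)`. -/
noncomputable def ChalWS (κ θ γ : ZFSet.{u})
    (σ : ZFSet.{u} → (ZFSet.{u} → Set ZFSet.{u}) → Set ZFSet.{u}) : Prop :=
  ∀ Fs : ZFSet.{u} → Set ZFSet.{u},
    (∀ i ∈ γ.toSet, (∀ j, j ∈ i → JudgeLegalAt κ (fun b => σ b (restrLt Fs b)) Fs j) →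
      ChalLegalAt κ θ (fun b => σ b (restrLt Fs b)) Fs i) ∧
    ((∀ i ∈ γ.toSet, JudgeLegalAt κ (fun b => σ b (restrLt Fs b)) Fs i) →
      ¬ JudgeWinsRun κ γ (fun b => σ b (restrLt Fs b)) Fs)

/-- `τ` is a winning strategy for the judge in the game `G_γ^θ(κ)`. -/
noncomputable def JudgeWS (κ θ γ : ZFSet.{u})
    (τ : ZFSet.{u} → (ZFSet.{u} → Set ZFSet.{u}) → Set ZFSet.{u}) : Prop :=
  ∀ Ms : ZFSet.{u} → Set ZFSet.{u},
    (∀ i ∈ γ.toSet,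
      (∀ j, (j ∈ i ∨ j = i) → ChalLegalAt κ θ Ms (fun b => τ b (restrLe Ms b)) j) →
      JudgeLegalAt κ Ms (fun b => τ b (restrLe Ms b)) i) ∧
    ((∀ i ∈ γ.toSet, ChalLegalAt κ θ Ms (fun b => τ b (restrLe Ms b)) i) →
      JudgeWinsRun κ γ Ms (fun b => τ b (restrLe Ms b)))

/-- `κ` has the `γ`-filter property: for every regular `θ > κ`, the challenger has no
winning strategy in `G_γ^θ(κ)`. -/
noncomputable def FilterPropZ (κ γ : ZFSet.{u}) : Prop :=
  ∀ θ : ZFSet.{u}, IsRegCard θ → κ ∈ θ → ¬ ∃ σ, ChalWS κ θ γ σ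

/-- `κ` has the strategic `γ`-filter property: for every regular `θ > κ`, the judge has a
winning strategy in `G_γ^θ(κ)`. -/
noncomputable def StratFilterPropZ (κ γ : ZFSet.{u}) : Prop :=
  ∀ θ : ZFSet.{u}, IsRegCard θ → κ ∈ θ → ∃ τ, JudgeWS κ θ γ τ

/-- `κ` is `α`-Ramsey (Holy–Schlicht, Definition 5.1): for arbitrarily large regular
cardinals `θ`, every `A ⊆ κ` is contained, as an element, in some weak `κ`-model
`M ≺ H(θ)` closed under `<α`-sequences, for which there exists a `κ`-powerset preserving
elementary embedding `j : M → N`. -/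
def AlphaRamseyZ (α κ : ZFSet.{u}) : Prop :=
  ∀ η : ZFSet.{u}, ∃ θ : ZFSet.{u}, η ∈ θ ∧ IsRegCard θ ∧ ∀ A : ZFSet, A ⊆ κ →
    ∃ M : Set ZFSet.{u}, A ∈ M ∧ WeakModelZ κ M ∧ LtClosed α M ∧ ElemSub M (HZ θ) ∧
      ∃ (N : Set ZFSet.{u}) (j : ↥M → ↥N), ElemEmbOf M N j ∧ PPres κ M N j

/-!
All that matters to the judge in a model played by the challenger is which subsets of `κ` and which
(codes of) `κ`-sequences of such subsets it contains, and all of these lie in `H(θ)` for every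
regular `θ > κ`. A strategy for one of the two games is therefore used in the other one through an
auxiliary play: each model `N i` of the challenger is shadowed by a `κ`-model `M ≺ H(θ)`, with `θ`
the parameter of the other game, that contains `N i ∩ H(θ)` and the codes required by the rules,
while the judge's filters are the same in both plays. A filter that is legal, or a run that is won
by the judge, against the shadows is so against the models `N i`. Shadows exist by a
Löwenheim–Skolem argument, as `κ^{<κ} = κ`, and they are models of `ZFC⁻` since `H(θ)` is one.
-/

-- Every function on sets counts as definable, so `image` and `map` apply to choice functions.
attribute [local instance] Classical.allZFSetDefinable

section SetsAndClasses

theorem zcard_eq_lift_card (x : ZFSet.{u}) : zcard x = Cardinal.lift.{u + 1} x.card :=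
  cardinalMk_coe_sort

theorem zcard_mono {x y : ZFSet.{u}} (h : x ⊆ y) : zcard x ≤ zcard y :=
  Cardinal.mk_le_mk_of_subset (coe_subset_coe.2 h)

theorem zcard_insert_lt {a x : ZFSet.{u}} {c : Cardinal.{u + 1}} (hc : Cardinal.aleph0 ≤ c)
    (hx : zcard x < c) : zcard (insert a x) < c := by
  refine lt_of_le_of_lt ?_ (Cardinal.add_lt_of_lt hc hx (Cardinal.one_lt_aleph0.trans_le hc))
  simpa only [zcard_eq_lift_card, Cardinal.lift_add, Cardinal.lift_one] using
    Cardinal.lift_le.2 card_insert_le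

theorem zcard_image_le (f : ZFSet.{u} → ZFSet.{u}) [Definable₁ f] (x : ZFSet.{u}) :
    zcard (image f x) ≤ zcard x := by
  simpa only [zcard_eq_lift_card] using Cardinal.lift_le.2 card_image_le

theorem exists_toSet_eq {X : Set ZFSet.{u}} {x : ZFSet.{u}} (h : Cardinal.mk X ≤ zcard x) :
    ∃ y : ZFSet.{u}, y.toSet = X := by
  obtain ⟨f⟩ := h
  have : Small.{u} x.toSet := small_coe x
  have : Small.{u} X := small_of_injective f.injective
  exact ⟨range (Subtype.val : X → ZFSet.{u}), (coe_range _).trans Subtype.range_val⟩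

/-- A transitive class: the elements of its members are members. -/
def IsTransClass (S : Set ZFSet.{u}) : Prop :=
  ∀ ⦃x⦄, x ∈ S → ∀ ⦃y⦄, y ∈ x → y ∈ S

theorem exists_map_eq_of_isFunc {d y f : ZFSet.{u}} (hf : IsFunc d y f) :
    ∃ g : ZFSet.{u} → ZFSet.{u}, (∀ b ∈ d, g b ∈ y) ∧ map g d = f := by
  choose! g hg using fun b hb => (hf.2 b hb).exists
  refine ⟨g, fun b hb => (pair_mem_prod.1 (hf.1 (hg b hb))).2, ?_⟩
  ext z
  rw [mem_map]
  constructor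
  · rintro ⟨b, hb, rfl⟩
    exact hg b hb
  · intro hz
    obtain ⟨b, hb, v, -, rfl⟩ := mem_prod.1 (hf.1 hz)
    exact ⟨b, hb, by rw [(hf.2 b hb).unique hz (hg b hb)]⟩

theorem pair_mem_map {g : ZFSet.{u} → ZFSet.{u}} {d b v : ZFSet.{u}} :
    pair b v ∈ map g d ↔ b ∈ d ∧ g b = v := by
  simp only [mem_map, pair_inj]
  exact ⟨fun ⟨_, hc, hcb, hv⟩ => hcb ▸ ⟨hc, hv⟩, fun ⟨hb, hv⟩ => ⟨b, hb, rfl, hv⟩⟩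

theorem map_eq_map_of_eqOn {g g' : ZFSet.{u} → ZFSet.{u}} {d : ZFSet.{u}}
    (h : ∀ b ∈ d, g b = g' b) : map g d = map g' d := by
  ext z
  simp only [mem_map]
  exact exists_congr fun b => and_congr_right fun hb => by rw [h b hb]

theorem isFunc_map_image (g : ZFSet.{u} → ZFSet.{u}) (d : ZFSet.{u}) :
    IsFunc d (image g d) (map g d) :=
  map_isFunc.2 fun _ hb => image.mk g d hb

theorem domain_subset_of_isFunc {d₁ d₂ y₁ y₂ f : ZFSet.{u}} (h₁ : IsFunc d₁ y₁ f)
    (h₂ : IsFunc d₂ y₂ f) : d₁ ⊆ d₂ := fun b hb =>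
  have ⟨_, hv⟩ := (h₁.2 b hb).exists
  (pair_mem_prod.1 (h₂.1 hv)).1

end SetsAndClasses

section HereditarilySmall

variable {θ : ZFSet.{u}}

theorem mem_HZ_iff {x : ZFSet.{u}} : x ∈ HZ θ ↔ zcard x < zcard θ ∧ ∀ y ∈ x, y ∈ HZ θ :=
  hereditarily_iff

theorem isTransClass_HZ (θ : ZFSet.{u}) : IsTransClass (HZ θ) :=
  fun _ hx => (mem_HZ_iff.1 hx).2

theorem mem_HZ_of_subset {x y : ZFSet.{u}} (hy : y ∈ HZ θ) (h : x ⊆ y) : x ∈ HZ θ :=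
  mem_HZ_iff.2
    ⟨(zcard_mono h).trans_lt (mem_HZ_iff.1 hy).1, fun _ hz => isTransClass_HZ θ hy (h hz)⟩

theorem mem_HZ_of_isTransitive {x : ZFSet.{u}} (hx : x.IsTransitive) (hc : zcard x < zcard θ) :
    x ∈ HZ θ := by
  suffices ∀ y : ZFSet.{u}, y ⊆ x → y ∈ HZ θ from this x (subset_refl x)
  intro y
  induction y using inductionOn with
  | h y ih =>
    exact fun hy => mem_HZ_iff.2
      ⟨(zcard_mono hy).trans_lt hc, fun z hz => ih z hz (hx.subset_of_mem (hy hz))⟩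

theorem empty_mem_HZ (hθ : Cardinal.aleph0 ≤ zcard θ) : (∅ : ZFSet.{u}) ∈ HZ θ := by
  refine mem_HZ_of_isTransitive isTransitive_empty ?_
  rw [zcard_eq_lift_card, ZFSet.card_empty, Cardinal.lift_zero]
  exact Cardinal.aleph0_pos.trans_le hθ

theorem insert_mem_HZ (hθ : Cardinal.aleph0 ≤ zcard θ) {a x : ZFSet.{u}} (ha : a ∈ HZ θ)
    (hx : x ∈ HZ θ) : insert a x ∈ HZ θ := by
  refine mem_HZ_iff.2 ⟨zcard_insert_lt hθ (mem_HZ_iff.1 hx).1, fun y hy => ?_⟩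
  obtain rfl | hy := mem_insert_iff.1 hy
  exacts [ha, isTransClass_HZ θ hx hy]

theorem doubleton_mem_HZ (hθ : Cardinal.aleph0 ≤ zcard θ) {a b : ZFSet.{u}} (ha : a ∈ HZ θ)
    (hb : b ∈ HZ θ) : ({a, b} : ZFSet.{u}) ∈ HZ θ :=
  insert_mem_HZ hθ ha (insert_mem_HZ hθ hb (empty_mem_HZ hθ))

theorem pair_mem_HZ (hθ : Cardinal.aleph0 ≤ zcard θ) {a b : ZFSet.{u}} (ha : a ∈ HZ θ)
    (hb : b ∈ HZ θ) : pair a b ∈ HZ θ :=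
  doubleton_mem_HZ hθ (insert_mem_HZ hθ ha (empty_mem_HZ hθ)) (doubleton_mem_HZ hθ ha hb)

theorem image_mem_HZ (f : ZFSet.{u} → ZFSet.{u}) [Definable₁ f] {x : ZFSet.{u}} (hx : x ∈ HZ θ)
    (hf : ∀ y ∈ x, f y ∈ HZ θ) : image f x ∈ HZ θ := by
  refine mem_HZ_iff.2 ⟨(zcard_image_le f x).trans_lt (mem_HZ_iff.1 hx).1, fun z hz => ?_⟩
  obtain ⟨y, hy, rfl⟩ := mem_image.1 hz
  exact hf y hy

theorem map_mem_HZ (hθ : Cardinal.aleph0 ≤ zcard θ) {g : ZFSet.{u} → ZFSet.{u}} {d : ZFSet.{u}}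
    (hd : d ∈ HZ θ) (hg : ∀ b ∈ d, g b ∈ HZ θ) : map g d ∈ HZ θ :=
  image_mem_HZ _ hd fun b hb => pair_mem_HZ hθ (isTransClass_HZ θ hd hb) (hg b hb)

theorem sUnion_mem_HZ (hθ : (zcard θ).IsRegular) {x : ZFSet.{u}} (hx : x ∈ HZ θ) :
    (⋃₀ x : ZFSet.{u}) ∈ HZ θ := by
  refine mem_HZ_iff.2 ⟨?_, fun y hy => ?_⟩
  · have h : (⋃₀ x : ZFSet.{u}).toSet = ⋃ y : x.toSet, (y : ZFSet.{u}).toSet :=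
      (coe_sUnion x).trans (Set.sUnion_image _ _ |>.trans (Set.biUnion_eq_iUnion _ _))
    rw [zcard, h, Cardinal.card_iUnion_lt_iff_forall_of_isRegular hθ (mem_HZ_iff.1 hx).1]
    exact fun y => (mem_HZ_iff.1 (isTransClass_HZ θ hx y.2)).1
  · obtain ⟨z, hz, hyz⟩ := mem_sUnion.1 hy
    exact isTransClass_HZ θ (isTransClass_HZ θ hx hz) hyz

theorem omega_mem_HZ (hθ : Cardinal.aleph0 < zcard θ) :
    Ordinal.omega0.toZFSet ∈ HZ θ := by
  refine mem_HZ_of_isTransitive (isOrdinal_toZFSet _).isTransitive ?_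
  rwa [zcard_eq_lift_card, Ordinal.card_toZFSet, Ordinal.card_omega0, Cardinal.lift_aleph0]

end HereditarilySmall

section Realization

variable {S : Set ZFSet.{u}} {n : ℕ}

theorem realize_memF (i j : Fin n) (v : Empty → ↥S) (xs : Fin n → ↥S) :
    (memF (mvar i) (mvar j)).Realize v xs ↔ (xs i : ZFSet.{u}) ∈ (xs j : ZFSet.{u}) :=
  BoundedFormula.realize_rel₂ (L := memLang) (R := (memRelType.mem : memLang.Relations 2))

theorem realize_eqF (i j : Fin n) (v : Empty → ↥S) (xs : Fin n → ↥S) :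
    ((mvar i : memLang.Term (Empty ⊕ Fin n)) =' (mvar j)).Realize v xs ↔ xs i = xs j :=
  BoundedFormula.realize_bdEqual _ _

theorem models_extAx (hS : IsTransClass S) : ↥S ⊨ extAx := by
  simp only [Sentence.Realize, Formula.Realize, extAx, BoundedFormula.realize_all,
    BoundedFormula.realize_imp, BoundedFormula.realize_iff, realize_memF, realize_eqF]
  exact fun a b h => Subtype.ext <| ZFSet.ext fun z =>
    ⟨fun hz => (h ⟨z, hS a.2 hz⟩).1 hz, fun hz => (h ⟨z, hS b.2 hz⟩).2 hz⟩

theorem models_emptyAx (hS : ∅ ∈ S) : ↥S ⊨ emptyAx := by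
  simp only [Sentence.Realize, Formula.Realize, emptyAx, BoundedFormula.realize_all,
    BoundedFormula.realize_ex, BoundedFormula.realize_not, realize_memF]
  exact ⟨⟨∅, hS⟩, fun a => notMem_empty a⟩

theorem models_pairAx (hS : ∀ a ∈ S, ∀ b ∈ S, {a, b} ∈ S) : ↥S ⊨ pairAx := by
  simp only [Sentence.Realize, Formula.Realize, pairAx, BoundedFormula.realize_all,
    BoundedFormula.realize_ex, BoundedFormula.realize_inf, realize_memF]
  exact fun a b => ⟨⟨{a.1, b.1}, hS a a.2 b b.2⟩, mem_pair.2 (Or.inl rfl), mem_pair.2 (Or.inr rfl)⟩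

theorem models_unionAx (hS : ∀ a ∈ S, (⋃₀ a : ZFSet.{u}) ∈ S) : ↥S ⊨ unionAx := by
  simp only [Sentence.Realize, Formula.Realize, unionAx, BoundedFormula.realize_all,
    BoundedFormula.realize_ex, BoundedFormula.realize_inf, BoundedFormula.realize_imp,
    realize_memF]
  exact fun a => ⟨⟨⋃₀ a.1, hS a a.2⟩, fun x y h => mem_sUnion.2 ⟨y, h.2, h.1⟩⟩

theorem models_infAx (hS : IsTransClass S) (hω : Ordinal.omega0.toZFSet ∈ S) : ↥S ⊨ infAx := by
  simp only [Sentence.Realize, Formula.Realize, infAx, BoundedFormula.realize_all,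
    BoundedFormula.realize_ex, BoundedFormula.realize_inf, BoundedFormula.realize_sup,
    BoundedFormula.realize_iff, BoundedFormula.realize_not, BoundedFormula.realize_imp,
    realize_memF, realize_eqF]
  have hzero : (∅ : ZFSet.{u}) ∈ Ordinal.omega0.toZFSet :=
    Ordinal.mem_toZFSet_iff.2 ⟨0, Ordinal.omega0_pos, Ordinal.toZFSet_zero⟩
  refine ⟨⟨_, hω⟩, ⟨⟨∅, hS hω hzero⟩, hzero, fun a => notMem_empty a⟩, fun x hx => ?_⟩
  obtain ⟨a, ha, hax⟩ := Ordinal.mem_toZFSet_iff.1 hx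
  have hsucc : insert x.1 x.1 ∈ Ordinal.omega0.toZFSet :=
    Ordinal.mem_toZFSet_iff.2 ⟨a + 1, Ordinal.isSuccLimit_omega0.add_one_lt ha,
      (Ordinal.toZFSet_add_one a).trans (congrArg (fun y => insert y y) hax)⟩
  exact ⟨⟨_, hS hω hsucc⟩, hsucc, fun b =>
    mem_insert_iff.trans (or_comm.trans (or_congr_right Subtype.ext_iff.symm))⟩

theorem models_foundAx (hS : IsTransClass S) : ↥S ⊨ foundAx := by
  simp only [Sentence.Realize, Formula.Realize, foundAx, BoundedFormula.realize_all,
    BoundedFormula.realize_ex, BoundedFormula.realize_inf, BoundedFormula.realize_not,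
    BoundedFormula.realize_imp, realize_memF]
  rintro a ⟨b, hba⟩
  obtain ⟨y, hy, hay⟩ := regularity a.1 fun ha => notMem_empty _ (ha ▸ hba)
  exact ⟨⟨y, hS a.2 hy⟩, hy, fun z hz => notMem_empty _ (hay ▸ mem_inter.2 hz)⟩

theorem models_choiceAx (hS : IsTransClass S)
    (himage : ∀ a ∈ S, ∀ f : ZFSet.{u} → ZFSet.{u}, (∀ x ∈ a, f x ∈ S) → image f a ∈ S) :
    ↥S ⊨ choiceAx := by
  simp only [Sentence.Realize, Formula.Realize, choiceAx, BoundedFormula.realize_all,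
    BoundedFormula.realize_ex, BoundedFormula.realize_inf, BoundedFormula.realize_not,
    BoundedFormula.realize_imp, realize_memF, realize_eqF]
  rintro a ⟨hne, hdisj⟩
  have hchoice : ∀ x ∈ a.1, ∃ y, y ∈ x := fun x hx =>
    have ⟨y, hy⟩ := hne ⟨x, hS a.2 hx⟩ hx
    ⟨y, hy⟩
  choose! c hc using hchoice
  refine ⟨⟨image c a.1, himage a a.2 c fun x hx => hS (hS a.2 hx) (hc x hx)⟩, fun x hx => ?_⟩
  refine ⟨⟨c x, hS x.2 (hc x hx)⟩, ⟨hc x hx, image.mk c _ hx⟩, fun z hz => Subtype.ext ?_⟩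
  obtain ⟨x', hx', hz'⟩ := mem_image.1 hz.2
  by_contra! hzx
  refine hdisj x ⟨x', hS a.2 hx'⟩ ⟨⟨hx, hx'⟩, fun h => hzx ?_⟩ ⟨z, hz.1, ?_⟩
  · exact hz'.symm.trans (congrArg c (Subtype.ext_iff.1 h).symm)
  · exact hz' ▸ hc x' hx'

theorem snoc_mk_self {α : Type*} (xs : Fin n → α) (a : α) :
    (Fin.snoc xs a : Fin (n + 1) → α) ⟨n, n.lt_succ_self⟩ = a :=
  Fin.snoc_last (α := fun _ => α) a xs

theorem snoc_mk_of_lt {α : Type*} (xs : Fin n → α) (a : α) {i : ℕ} (hi : i < n)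
    (hi' : i < n + 1) : (Fin.snoc xs a : Fin (n + 1) → α) ⟨i, hi'⟩ = xs ⟨i, hi⟩ :=
  Fin.snoc_castSucc (α := fun _ => α) a xs ⟨i, hi⟩

theorem realize_liftAt_one_snoc (φ : memLang.BoundedFormula Empty (n + 2)) (v : Empty → ↥S)
    (xs : Fin n → ↥S) (a x y : ↥S) :
    (φ.liftAt 1 n).Realize v (Fin.snoc (Fin.snoc (Fin.snoc xs a) x) y : Fin (n + 3) → ↥S) ↔
      φ.Realize v (Fin.snoc (Fin.snoc xs x) y) := by
  rw [BoundedFormula.realize_liftAt (by omega)]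
  refine iff_of_eq (congrArg _ (funext fun i => ?_))
  grind [Fin.snoc]

theorem realize_liftAt_two_snoc (φ : memLang.BoundedFormula Empty (n + 1)) (v : Empty → ↥S)
    (xs : Fin n → ↥S) (a b x : ↥S) :
    (φ.liftAt 2 n).Realize v (Fin.snoc (Fin.snoc (Fin.snoc xs a) b) x : Fin (n + 3) → ↥S) ↔
      φ.Realize v (Fin.snoc xs x) := by
  rw [BoundedFormula.realize_liftAt (by omega)]
  refine iff_of_eq (congrArg _ (funext fun i => ?_))
  grind [Fin.snoc]

theorem realize_liftAt_two_snoc_snoc (φ : memLang.BoundedFormula Empty (n + 2)) (v : Empty → ↥S)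
    (xs : Fin n → ↥S) (a b x y : ↥S) :
    (φ.liftAt 2 n).Realize v
        (Fin.snoc (Fin.snoc (Fin.snoc (Fin.snoc xs a) b) x) y : Fin (n + 4) → ↥S) ↔
      φ.Realize v (Fin.snoc (Fin.snoc xs x) y) := by
  rw [BoundedFormula.realize_liftAt (by omega)]
  refine iff_of_eq (congrArg _ (funext fun i => ?_))
  grind [Fin.snoc]

theorem models_sepAx (hS : ∀ a ∈ S, ∀ b ⊆ a, b ∈ S) (φ : memLang.BoundedFormula Empty (n + 1)) :
    ↥S ⊨ sepAx n φ := by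
  rw [sepAx, Sentence.Realize, BoundedFormula.realize_alls]
  intro xs
  simp (disch := omega) only [BoundedFormula.realize_all, BoundedFormula.realize_ex,
    BoundedFormula.realize_inf, BoundedFormula.realize_iff, realize_memF,
    realize_liftAt_two_snoc, snoc_mk_self, snoc_mk_of_lt]
  intro a
  let P : ZFSet.{u} → Prop := fun z => ∃ hz : z ∈ S, φ.Realize default (Fin.snoc xs ⟨z, hz⟩)
  have hP (x : ↥S) : P x ↔ φ.Realize default (Fin.snoc xs x) := ⟨fun ⟨_, h⟩ => h, fun h => ⟨x.2, h⟩⟩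
  exact ⟨⟨ZFSet.sep P a, hS a a.2 _ sep_subset⟩, fun x =>
    mem_sep.trans (and_congr_right fun _ => hP x)⟩

theorem models_collAx (hS : IsTransClass S)
    (himage : ∀ a ∈ S, ∀ f : ZFSet.{u} → ZFSet.{u}, (∀ x ∈ a, f x ∈ S) → image f a ∈ S)
    (φ : memLang.BoundedFormula Empty (n + 2)) : ↥S ⊨ collAx n φ := by
  rw [collAx, Sentence.Realize, BoundedFormula.realize_alls]
  intro xs
  simp (disch := omega) only [BoundedFormula.realize_all, BoundedFormula.realize_ex,
    BoundedFormula.realize_inf, BoundedFormula.realize_imp, realize_memF, realize_liftAt_one_snoc,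
    realize_liftAt_two_snoc_snoc, snoc_mk_self, snoc_mk_of_lt]
  intro a htotal
  have hwitness : ∀ x ∈ a.1, ∃ y, ∃ hx : x ∈ S, ∃ hy : y ∈ S,
      φ.Realize default (Fin.snoc (Fin.snoc xs ⟨x, hx⟩) ⟨y, hy⟩) := fun x hx =>
    have ⟨y, hy⟩ := htotal ⟨x, hS a.2 hx⟩ hx
    ⟨y, hS a.2 hx, y.2, hy⟩
  choose! c _ hcS hc using hwitness
  exact ⟨⟨image c a.1, himage a a.2 c hcS⟩, fun x hx => ⟨⟨c x, hcS x hx⟩, image.mk c _ hx, hc x hx⟩⟩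

end Realization

theorem HZ_models_ZFCminus {θ : ZFSet.{u}} (hθ : (zcard θ).IsRegular)
    (hθ' : Cardinal.aleph0 < zcard θ) : ↥(HZ θ) ⊨ ZFCminus := by
  have himage : ∀ a ∈ HZ θ, ∀ f : ZFSet.{u} → ZFSet.{u}, (∀ x ∈ a, f x ∈ HZ θ) →
      image f a ∈ HZ θ := fun _ ha f => image_mem_HZ f ha
  refine (Theory.model_iff _).2 fun φ hφ => ?_
  obtain ((rfl | rfl | rfl | rfl | rfl | rfl | rfl) | hφ) | hφ := hφ
  · exact models_extAx (isTransClass_HZ θ)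
  · exact models_emptyAx (empty_mem_HZ hθ'.le)
  · exact models_pairAx fun a ha b hb => doubleton_mem_HZ hθ'.le ha hb
  · exact models_unionAx fun a ha => sUnion_mem_HZ hθ ha
  · exact models_infAx (isTransClass_HZ θ) (omega_mem_HZ hθ')
  · exact models_foundAx (isTransClass_HZ θ)
  · exact models_choiceAx (isTransClass_HZ θ) himage
  · obtain ⟨n, ψ, rfl⟩ := Set.mem_iUnion.1 hφ
    exact models_sepAx (fun a ha b hb => mem_HZ_of_subset ha hb) ψ
  · obtain ⟨n, ψ, rfl⟩ := Set.mem_iUnion.1 hφ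
    exact models_collAx (isTransClass_HZ θ) himage ψ

section ElementarySubmodels

theorem exists_superset_closed_under.{v} {α ι : Type v} {ar : ι → Type v} (op : ∀ i, (ar i → α) → α)
    {c : Cardinal.{v}} (hc : Cardinal.aleph0 ≤ c) (hι : Cardinal.mk ι ≤ c)
    (har : ∀ i, c ^ Cardinal.mk (ar i) ≤ c) {X : Set α} (hX : Cardinal.mk X ≤ c) :
    ∃ Y : Set α, X ⊆ Y ∧ Cardinal.mk Y ≤ c ∧ ∀ i x, (∀ a, x a ∈ Y) → op i x ∈ Y := by
  -- `Y` consists of the values of well-founded terms, with the elements of `X` as constants.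
  let arity : ↥X ⊕ ι → Type v := Sum.elim (fun _ => PEmpty) ar
  let value : WType arity → α := WType.elim α fun
    | ⟨.inl x, _⟩ => x
    | ⟨.inr i, x⟩ => op i x
  have hterms : Cardinal.mk (WType arity) ≤ c := by
    have hpow : ∀ i, c ^ Cardinal.mk (arity i) ≤ c := Sum.rec
      (fun _ => by
        simpa only [arity, Sum.elim_inl, Cardinal.mk_pempty, Cardinal.power_zero] using
          Cardinal.one_le_aleph0.trans hc)
      har
    refine WType.cardinalMk_le_of_le ((Cardinal.sum_le_sum _ _ hpow).trans ?_)
    rw [Cardinal.sum_const', Cardinal.mk_sum, Cardinal.lift_id, Cardinal.lift_id]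
    exact (mul_le_mul_left (Cardinal.add_le_of_le hc hX hι) c).trans_eq (Cardinal.mul_eq_self hc)
  refine ⟨Set.range value, fun x hx => ⟨.mk (.inl ⟨x, hx⟩) PEmpty.elim, rfl⟩,
    Cardinal.mk_range_le.trans hterms, fun i x hx => ?_⟩
  choose t ht using hx
  exact ⟨.mk (.inr i) t, congrArg (op i) (funext ht)⟩

instance (n : ℕ) : Countable (memLang.Relations n) :=
  ⟨fun _ => 0, fun | .mem, .mem, _ => rfl⟩

instance (n : ℕ) : IsEmpty (memLang.Functions n) :=
  inferInstanceAs (IsEmpty Empty)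

theorem mk_sigma_boundedFormula_succ_le_aleph0 :
    Cardinal.mk (Σ n, memLang.BoundedFormula Empty (n + 1)) ≤ Cardinal.aleph0 := by
  have hlang : memLang.card ≤ Cardinal.aleph0 := by
    rw [Language.card, Language.Symbols]
    exact Cardinal.mk_le_aleph0
  refine (Cardinal.mk_le_of_injective (f := Sigma.map Nat.succ fun _ => id) ?_).trans
    (BoundedFormula.card_le.trans ?_)
  · exact Nat.succ_injective.sigma_map fun _ => Function.injective_id
  · simpa only [Cardinal.mk_eq_zero, Cardinal.lift_zero, zero_add, Cardinal.lift_uzero,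
      max_le_iff, le_refl, true_and] using hlang

variable {S T : Set ZFSet.{u}}

theorem elemSub_of_tarskiVaught (h : S ⊆ T)
    (htv : ∀ (n : ℕ) (φ : memLang.BoundedFormula Empty (n + 1)) (x : Fin n → ↥S) (a : ↥T),
      φ.Realize default (Fin.snoc (Set.inclusion h ∘ x) a : Fin (n + 1) → ↥T) →
      ∃ b : ↥S, φ.Realize default
        (Fin.snoc (Set.inclusion h ∘ x) (Set.inclusion h b) : Fin (n + 1) → ↥T)) :
    ElemSub S T := by
  let e : ↥S ↪[memLang] ↥T :=
    { toFun := Set.inclusion h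
      inj' := Set.inclusion_injective h
      map_fun' := fun f => isEmptyElim f
      map_rel' := fun | .mem, _ => Iff.rfl }
  refine ⟨h, fun n φ x => ?_⟩
  rw [← (e.toElementaryEmbedding htv).map_boundedFormula, Subsingleton.elim (_ ∘ Empty.elim)]
  rfl

theorem ElemSub.models (h : ElemSub S T) {Th : memLang.Theory} (hT : ↥T ⊨ Th) : ↥S ⊨ Th := by
  refine (Theory.model_iff _).2 fun φ hφ => ?_
  have hφS := h.2 0 φ default
  rw [Subsingleton.elim Empty.elim (default : Empty → ↥S),
    Subsingleton.elim Empty.elim (default : Empty → ↥T),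
    Subsingleton.elim (fun i : Fin 0 => _) (default : Fin 0 → ↥T)] at hφS
  exact hφS.2 ((Theory.model_iff _).1 hT φ hφ)

theorem exists_map_eq_of_restrict {δ : ZFSet.{u}}
    (hT : ∀ g : ZFSet.{u} → ZFSet.{u}, (∀ b ∈ δ, g b ∈ T) → map g δ ∈ T) (x : δ.toSet → ↥T) :
    ∃ f : ↥T, ∀ g : ZFSet.{u} → ZFSet.{u}, (∀ b : δ.toSet, g b = x b) → map g δ = f := by
  let g₀ := Function.extend Subtype.val (Subtype.val ∘ x) id
  have hg₀ (b : δ.toSet) : g₀ b = x b := Subtype.val_injective.extend_apply _ _ b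
  exact ⟨⟨map g₀ δ, hT g₀ fun b hb => hg₀ ⟨b, hb⟩ ▸ (x ⟨b, hb⟩).2⟩,
    fun g hg => map_eq_map_of_eqOn fun b hb => (hg ⟨b, hb⟩).trans (hg₀ ⟨b, hb⟩).symm⟩

theorem exists_elemSub_ltClosed {κ : ZFSet.{u}} (hκ : IsCardZ κ)
    (hinf : Cardinal.aleph0 ≤ zcard κ) (hlt : (zcard κ) ^< (zcard κ) = zcard κ)
    (hTne : T.Nonempty)
    (hT : ∀ δ ∈ κ, ∀ g : ZFSet.{u} → ZFSet.{u}, (∀ b ∈ δ, g b ∈ T) → map g δ ∈ T)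
    {X : Set ZFSet.{u}} (hXT : X ⊆ T) (hX : Cardinal.mk X ≤ zcard κ) :
    ∃ M : Set ZFSet.{u}, X ⊆ M ∧ Cardinal.mk M ≤ zcard κ ∧ ElemSub M T ∧ LtClosed κ M := by
  have : Nonempty ↥T := hTne.to_subtype
  choose seq hseq using fun δ : κ.toSet => exists_map_eq_of_restrict (hT δ δ.2)
  -- Close `X` under Skolem functions for `T` and under coding sequences of length below `κ`.
  let ar : ULift.{u + 1} (Σ n, memLang.BoundedFormula Empty (n + 1)) ⊕ κ.toSet → Type (u + 1) :=
    Sum.elim (fun φ => ULift (Fin φ.down.1)) (fun δ => δ.1.toSet)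
  let op : ∀ i, (ar i → ↥T) → ↥T := Sum.rec
    (fun φ x => Classical.epsilon fun a =>
      φ.down.2.Realize default (Fin.snoc (x ∘ ULift.up) a : Fin (φ.down.1 + 1) → ↥T))
    seq
  have har : ∀ i, zcard κ ^ Cardinal.mk (ar i) ≤ zcard κ := fun i => by
    refine (Cardinal.le_powerlt _ ?_).trans_eq hlt
    obtain φ | δ := i
    exacts [(Cardinal.mk_lt_aleph0_iff.2 (inferInstanceAs (Finite (ULift _)))).trans_le hinf,
      hκ.2 δ δ.2]
  have hops : Cardinal.mk (ULift.{u + 1} (Σ n, memLang.BoundedFormula Empty (n + 1)) ⊕ κ.toSet) ≤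
      zcard κ := by
    rw [Cardinal.mk_sum, Cardinal.lift_id, Cardinal.lift_id, Cardinal.mk_uLift]
    exact Cardinal.add_le_of_le hinf ((Cardinal.lift_le_aleph0.2
      mk_sigma_boundedFormula_succ_le_aleph0).trans hinf) le_rfl
  obtain ⟨Y, hXY, hYκ, hY⟩ := exists_superset_closed_under op hinf hops har
    (X := Subtype.val ⁻¹' X)
    ((Cardinal.mk_preimage_of_injective _ X Subtype.val_injective).trans hX)
  refine ⟨Subtype.val '' Y, fun x hx => ⟨⟨x, hXT hx⟩, hXY hx, rfl⟩, Cardinal.mk_image_le.trans hYκ,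
    elemSub_of_tarskiVaught (Subtype.coe_image_subset T Y) fun n φ x a ha => ?_,
    fun δ y f hδ hy hf => ?_⟩
  · have hxY : ∀ i, Set.inclusion (Subtype.coe_image_subset T Y) (x i) ∈ Y := fun i => by
      obtain ⟨_, t, ht, rfl⟩ := x i
      exact ht
    let x' : Fin n → ↥T := Set.inclusion (Subtype.coe_image_subset T Y) ∘ x
    exact ⟨⟨_, _, hY (.inl ⟨n, φ⟩) (x' ∘ ULift.down) fun i => hxY i.down, rfl⟩,
      Classical.epsilon_spec (p := fun b => φ.Realize default (Fin.snoc x' b : Fin (n + 1) → ↥T))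
        ⟨a, ha⟩⟩
  · obtain ⟨g, hgy, rfl⟩ := exists_map_eq_of_isFunc hf
    choose x hxY hx using fun b : δ.toSet => hy (hgy b b.2)
    exact ⟨_, hY (.inr ⟨δ, hδ⟩) x hxY, (hseq ⟨δ, hδ⟩ x g fun b => (hx b).symm).symm⟩

end ElementarySubmodels

/-- The standing assumptions on the parameters of the games `G_γ^θ(κ)`: `κ = κ^{<κ}` is an infinite
cardinal and `θ > κ` is regular. -/
structure IsGameParam (κ θ : ZFSet.{u}) : Prop where
  isCard : IsCardZ κ
  aleph0_le : Cardinal.aleph0 ≤ zcard κ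
  powerlt_eq : (zcard κ) ^< (zcard κ) = zcard κ
  isRegCard : IsRegCard θ
  mem : κ ∈ θ

namespace IsGameParam

variable {κ θ : ZFSet.{u}}

theorem zcard_lt (h : IsGameParam κ θ) : zcard κ < zcard θ :=
  h.isRegCard.2.2 κ h.mem

theorem aleph0_le_zcard (h : IsGameParam κ θ) : Cardinal.aleph0 ≤ zcard θ :=
  h.aleph0_le.trans h.zcard_lt.le

theorem mem_HZ (h : IsGameParam κ θ) : κ ∈ HZ θ :=
  mem_HZ_of_isTransitive h.isCard.1.isTransitive h.zcard_lt

theorem exists_kappaModel (h : IsGameParam κ θ) {X : Set ZFSet.{u}} (hXθ : X ⊆ HZ θ)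
    (hX : Cardinal.mk X ≤ zcard κ) :
    ∃ M : Set ZFSet.{u}, X ⊆ M ∧ KappaModelZ κ M ∧ ElemSub M (HZ θ) := by
  have hκθ : insert κ κ.toSet ⊆ HZ θ :=
    Set.insert_subset h.mem_HZ fun _ hz => isTransClass_HZ θ h.mem_HZ hz
  have hκ : Cardinal.mk ↥(insert κ κ.toSet) ≤ zcard κ :=
    Cardinal.mk_insert_le.trans (Cardinal.add_le_of_le h.aleph0_le le_rfl
      (Cardinal.one_le_aleph0.trans h.aleph0_le))
  obtain ⟨M, hXM, hMκ, hMθ, hM⟩ := exists_elemSub_ltClosed h.isCard h.aleph0_le h.powerlt_eq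
    ⟨κ, h.mem_HZ⟩
    (fun δ hδ _ hg => map_mem_HZ h.aleph0_le_zcard (isTransClass_HZ θ h.mem_HZ hδ) hg)
    (Set.union_subset hXθ hκθ)
    ((Cardinal.mk_union_le _ _).trans (Cardinal.add_le_of_le h.aleph0_le hX hκ))
  have hκM : insert κ κ.toSet ⊆ M := Set.subset_union_right.trans hXM
  have hκM' : zcard κ ≤ Cardinal.mk M :=
    Cardinal.mk_le_mk_of_subset ((Set.subset_insert κ _).trans hκM)
  exact ⟨M, Set.subset_union_left.trans hXM, ⟨⟨hMκ.antisymm hκM', hκM, hMθ.models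
    (HZ_models_ZFCminus h.isRegCard.2.1 (h.aleph0_le.trans_lt h.zcard_lt))⟩, hM⟩, hMθ⟩

end IsGameParam

section Plays

variable {κ θ i : ZFSet.{u}} {Ms Ms' Fs Fs' : ZFSet.{u} → Set ZFSet.{u}}

theorem mem_of_mem_or_eq {j k : ZFSet.{u}} (hi : i.IsTransitive) (hk : k ∈ j ∨ k = j)
    (hj : j ∈ i) : k ∈ i :=
  hk.elim (hi.mem_trans · hj) (· ▸ hj)

theorem mem_or_eq_trans {j k : ZFSet.{u}} (hi : i.IsTransitive) (hk : k ∈ j ∨ k = j)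
    (hj : j ∈ i ∨ j = i) : k ∈ i ∨ k = i :=
  hj.elim (fun hj => .inl (mem_of_mem_or_eq hi hk hj)) (· ▸ hk)

theorem restrLt_of_mem {j : ZFSet.{u}} (h : j ∈ i) : restrLt Ms i j = Ms j :=
  if_pos h

theorem restrLe_of_mem_or_eq {j : ZFSet.{u}} (h : j ∈ i ∨ j = i) : restrLe Ms i j = Ms j :=
  if_pos h

theorem restrLt_congr (h : ∀ j ∈ i, Ms j = Ms' j) : restrLt Ms i = restrLt Ms' i := by
  classical exact funext fun j => ite_congr rfl (h j) fun _ => rfl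

theorem restrLe_congr (h : ∀ j, j ∈ i ∨ j = i → Ms j = Ms' j) : restrLe Ms i = restrLe Ms' i := by
  classical exact funext fun j => ite_congr rfl (h j) fun _ => rfl

theorem CodesSetSeq.congr {m : ZFSet.{u}} (hm : CodesSetSeq m i Ms) (h : ∀ b ∈ i, Ms b = Ms' b) :
    CodesSetSeq m i Ms' :=
  ⟨hm.1, fun b v hb hv => (hm.2 b v hb hv).trans (h b hb)⟩

theorem ChalLegalAt.congr (h : ChalLegalAt κ θ Ms Fs i) (hM : ∀ j, j ∈ i ∨ j = i → Ms j = Ms' j)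
    (hF : ∀ j ∈ i, Fs j = Fs' j) : ChalLegalAt κ θ Ms' Fs' i := by
  obtain ⟨hmono, hmodel, helem, ⟨m, hm, hmcode⟩, ⟨f, hf, hfcode⟩⟩ := h
  rw [hM i (.inr rfl)] at hmono hmodel helem hm hf
  exact ⟨fun j hj => hM j (.inl hj) ▸ hmono j hj, hmodel, helem,
    ⟨m, hm, hmcode.congr fun j hj => hM j (.inl hj)⟩,
    ⟨f, hf, hfcode.congr fun j hj => by rw [hM j (.inl hj), hF j hj]⟩⟩

theorem JudgeLegalAt.mono (h : JudgeLegalAt κ Ms Fs i) (hκθ : κ ∈ HZ θ)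
    (hM : Ms' i ∩ HZ θ ⊆ Ms i) (hF : ∀ j, j ∈ i ∨ j = i → Fs j = Fs' j) :
    JudgeLegalAt κ Ms' Fs' i := by
  obtain ⟨hfilter, hmeasure, hmono⟩ := h
  rw [hF i (.inr rfl)] at hfilter hmeasure hmono
  exact ⟨hfilter, fun A hA hAκ => hmeasure A (hM ⟨hA, mem_HZ_of_subset hκθ hAκ⟩) hAκ,
    fun j hj => hF j (.inl hj) ▸ hmono j hj⟩

theorem CodesFilterSeq.mem_HZ {F : Set ZFSet.{u}} {m : ZFSet.{u}} (hm : CodesFilterSeq κ F m)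
    (hθ : Cardinal.aleph0 ≤ zcard θ) (hκθ : κ ∈ HZ θ) (hF : ∀ A ∈ F, A ⊆ κ) : m ∈ HZ θ := by
  obtain ⟨⟨y, hy⟩, hmF⟩ := hm
  obtain ⟨g, -, rfl⟩ := exists_map_eq_of_isFunc hy
  exact map_mem_HZ hθ hκθ fun b hb =>
    mem_HZ_of_subset hκθ (hF _ (hmF b _ hb (pair_mem_map.2 ⟨hb, rfl⟩)))

theorem MNormalZ.mono {F M M' : Set ZFSet.{u}} (h : MNormalZ κ F M)
    (hθ : Cardinal.aleph0 ≤ zcard θ) (hκθ : κ ∈ HZ θ) (hM : M' ∩ HZ θ ⊆ M) : MNormalZ κ F M' :=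
  ⟨h.1, fun A hA hAκ => h.2.1 A (hM ⟨hA, mem_HZ_of_subset hκθ hAκ⟩) hAκ,
    fun m hm hmF => h.2.2 m (hM ⟨hm, hmF.mem_HZ hθ hκθ h.1.1⟩) hmF⟩

theorem JudgeWinsRun.mono {γ : ZFSet.{u}} (h : JudgeWinsRun κ γ Ms Fs)
    (hθ : Cardinal.aleph0 ≤ zcard θ) (hκθ : κ ∈ HZ θ) (hM : ∀ i ∈ γ, Ms' i ∩ HZ θ ⊆ Ms i)
    (hF : ∀ i ∈ γ, Fs i = Fs' i) : JudgeWinsRun κ γ Ms' Fs' := by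
  have hFs : ⋃ i ∈ γ.toSet, Fs i = ⋃ i ∈ γ.toSet, Fs' i := Set.iUnion₂_congr hF
  rw [JudgeWinsRun, hFs] at h
  refine h.mono hθ hκθ ?_
  rw [Set.iUnion₂_inter]
  exact Set.iUnion₂_mono hM

theorem zcard_le_of_chalLegalAt (h : ∀ j, j ∈ i ∨ j = i → ChalLegalAt κ θ Ms Fs j) :
    zcard i ≤ zcard κ := by
  obtain ⟨hmono, ⟨⟨hcard, -⟩, -⟩, -⟩ := h i (.inr rfl)
  choose! m hm hcode using fun j (hj : j ∈ i) => (h j (.inl hj)).2.2.2.1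
  rw [← hcard]
  refine Cardinal.mk_le_of_injective (f := fun j : i.toSet => ⟨m j, hmono j j.2 (hm j j.2)⟩) ?_
  intro j k hjk
  obtain ⟨⟨y, hy⟩, -⟩ := hcode j j.2
  obtain ⟨⟨z, hz⟩, -⟩ := hcode k k.2
  rw [← Subtype.mk.inj hjk] at hz
  exact Subtype.ext ((domain_subset_of_isFunc hy hz).antisymm (domain_subset_of_isFunc hz hy))

end Plays

section Cover

variable {κ θ θ' i : ZFSet.{u}}

theorem exists_codesSetSeq (hθ : Cardinal.aleph0 ≤ zcard θ) (hi : i ∈ HZ θ)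
    {S : ZFSet.{u} → Set ZFSet.{u}} (hS : ∀ j ∈ i, S j ⊆ HZ θ)
    (hcard : ∀ j ∈ i, Cardinal.mk (S j) < zcard θ) : ∃ m ∈ HZ θ, CodesSetSeq m i S := by
  choose! g hg using fun j hj => exists_toSet_eq (hcard j hj).le
  refine ⟨map g i, map_mem_HZ hθ hi fun j hj => mem_HZ_iff.2 ⟨?_, fun x hx => hS j hj ?_⟩,
    ⟨_, isFunc_map_image g i⟩, fun j _ hj hv => (pair_mem_map.1 hv).2 ▸ hg j hj⟩
  · exact (congrArg (fun X : Set ZFSet.{u} => Cardinal.mk X) (hg j hj)).trans_lt (hcard j hj)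
  · exact hg j hj ▸ hx

open Classical in
/-- `M` covers `X` at stage `i` of `G_γ^θ(κ)`: after the models `S j` and filters `Fs j` for
`j < i`, the move `M` is legal for the challenger and contains `X ∩ H(θ)`. -/
def IsCoverMove (κ θ : ZFSet.{u}) (X : Set ZFSet.{u}) (S Fs : ZFSet.{u} → Set ZFSet.{u})
    (i : ZFSet.{u}) (M : Set ZFSet.{u}) : Prop :=
  X ∩ HZ θ ⊆ M ∧ ChalLegalAt κ θ (Function.update S i M) Fs i

theorem IsGameParam.exists_isCoverMove (h : IsGameParam κ θ) (hi : i.IsOrdinal)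
    (hiκ : zcard i ≤ zcard κ) {X : Set ZFSet.{u}} (hX : Cardinal.mk X ≤ zcard κ)
    {S : ZFSet.{u} → Set ZFSet.{u}} (hS : ∀ j ∈ i, S j ⊆ HZ θ)
    (hSκ : ∀ j ∈ i, Cardinal.mk (S j) ≤ zcard κ) (Fs : ZFSet.{u} → Set ZFSet.{u}) :
    ∃ M, IsCoverMove κ θ X S Fs i M := by
  classical
  have hiθ : i ∈ HZ θ := mem_HZ_of_isTransitive hi.isTransitive (hiκ.trans_lt h.zcard_lt)
  obtain ⟨m, hm, hmS⟩ := exists_codesSetSeq h.aleph0_le_zcard hiθ hS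
    fun j hj => (hSκ j hj).trans_lt h.zcard_lt
  obtain ⟨f, hf, hfS⟩ := exists_codesSetSeq h.aleph0_le_zcard hiθ (S := fun j => Fs j ∩ S j)
    (fun j hj => Set.inter_subset_right.trans (hS j hj))
    fun j hj => (Cardinal.mk_le_mk_of_subset Set.inter_subset_right).trans_lt
      ((hSκ j hj).trans_lt h.zcard_lt)
  have hSunion : Cardinal.mk ↥(⋃ j : i.toSet, S j) ≤ zcard κ :=
    (Cardinal.mk_iUnion_le _).trans <|
      (mul_le_mul' hiκ (ciSup_le' fun j : i.toSet => hSκ j j.2)).trans_eq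
        (Cardinal.mul_eq_self h.aleph0_le)
  have hcodes : Cardinal.mk ↥({m, f} : Set ZFSet.{u}) ≤ zcard κ :=
    (Cardinal.mk_lt_aleph0_iff.2 (Set.toFinite _).to_subtype).le.trans h.aleph0_le
  obtain ⟨M, hM, hMκ, hMθ⟩ := h.exists_kappaModel
    (X := (X ∩ HZ θ) ∪ ((⋃ j : i.toSet, S j) ∪ {m, f}))
    (Set.union_subset Set.inter_subset_right (Set.union_subset
      (Set.iUnion_subset fun j => hS j j.2) (Set.insert_subset hm (Set.singleton_subset_iff.2 hf))))
    ((Cardinal.mk_union_le _ _).trans (Cardinal.add_le_of_le h.aleph0_le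
      ((Cardinal.mk_le_mk_of_subset Set.inter_subset_left).trans hX)
      ((Cardinal.mk_union_le _ _).trans (Cardinal.add_le_of_le h.aleph0_le hSunion hcodes))))
  simp only [Set.union_subset_iff, Set.iUnion_subset_iff, Set.insert_subset_iff,
    Set.singleton_subset_iff] at hM
  obtain ⟨hXM, hSM, hmM, hfM⟩ := hM
  have hupdate : ∀ j ∈ i, S j = Function.update S i M j := fun j hj =>
    (Function.update_of_ne (ne_of_mem_of_not_mem hj (mem_irrefl i)) M S).symm
  refine ⟨M, hXM, ?_⟩
  rw [ChalLegalAt, Function.update_self]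
  exact ⟨fun j hj => hupdate j hj ▸ hSM ⟨j, hj⟩, hMκ, hMθ, ⟨m, hmM, hmS.congr hupdate⟩,
    ⟨f, hfM, hfS.congr fun j hj => by rw [hupdate j hj]⟩⟩

open Classical in
/-- The auxiliary play by which a run `N` of challenger moves is shadowed in `G_γ^θ(κ)`: at each
stage, a choice of move covering `N i`, where `T` is the strategy producing the judge's replies to
the auxiliary play. -/
noncomputable def coverSeq (κ θ : ZFSet.{u}) (N : ZFSet.{u} → Set ZFSet.{u})
    (T : ZFSet.{u} → (ZFSet.{u} → Set ZFSet.{u}) → Set ZFSet.{u}) : ZFSet.{u} → Set ZFSet.{u} :=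
  mem_wf.fix fun i C =>
    let S : ZFSet.{u} → Set ZFSet.{u} := fun j => if hj : j ∈ i then C j hj else ∅
    Classical.epsilon (IsCoverMove κ θ (N i) S (restrLt (fun j => T j (restrLe S j)) i) i)

variable {N N' : ZFSet.{u} → Set ZFSet.{u}}
  {T T' : ZFSet.{u} → (ZFSet.{u} → Set ZFSet.{u}) → Set ZFSet.{u}}

theorem coverSeq_eq (hi : i.IsTransitive) :
    coverSeq κ θ N T i = Classical.epsilon (IsCoverMove κ θ (N i) (restrLt (coverSeq κ θ N T) i)
      (restrLt (fun j => T j (restrLe (coverSeq κ θ N T) j)) i) i) := by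
  have hS : ∀ j ∈ i, restrLe (restrLt (coverSeq κ θ N T) i) j = restrLe (coverSeq κ θ N T) j :=
    fun j hj => restrLe_congr fun k hk =>
      restrLt_of_mem (mem_of_mem_or_eq hi hk hj)
  rw [← restrLt_congr fun j hj => congrArg (T j) (hS j hj)]
  exact mem_wf.fix_eq _ i

theorem coverSeq_congr (hi : i.IsOrdinal) (hN : ∀ j, j ∈ i ∨ j = i → N j = N' j)
    (hT : ∀ j ∈ i, T j = T' j) : coverSeq κ θ N T i = coverSeq κ θ N' T' i := by
  induction i using inductionOn with
  | h i ih =>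
    have hlt : ∀ j ∈ i, coverSeq κ θ N T j = coverSeq κ θ N' T' j := fun j hj =>
      ih j hj (hi.mem hj)
        (fun k hk => hN k (.inl (mem_of_mem_or_eq hi.isTransitive hk hj)))
        fun k hk => hT k (hi.mem_trans hk hj)
    have hle : ∀ j ∈ i, restrLe (coverSeq κ θ N T) j = restrLe (coverSeq κ θ N' T') j :=
      fun j hj => restrLe_congr fun k hk =>
        hlt k (mem_of_mem_or_eq hi.isTransitive hk hj)
    have hreply : ∀ j ∈ i,
        T j (restrLe (coverSeq κ θ N T) j) = T' j (restrLe (coverSeq κ θ N' T') j) :=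
      fun j hj => by rw [hT j hj, hle j hj]
    rw [coverSeq_eq hi.isTransitive, coverSeq_eq hi.isTransitive, hN i (.inr rfl),
      restrLt_congr hlt, restrLt_congr hreply]

theorem coverSeq_spec (h : IsGameParam κ θ') (hi : i.IsOrdinal) {Fs : ZFSet.{u} → Set ZFSet.{u}}
    (hN : ∀ j, j ∈ i ∨ j = i → ChalLegalAt κ θ N Fs j) :
    N i ∩ HZ θ' ⊆ coverSeq κ θ' N T i ∧ ChalLegalAt κ θ' (coverSeq κ θ' N T)
      (fun j => T j (restrLe (coverSeq κ θ' N T) j)) i := by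
  classical
  induction i using inductionOn with
  | h i ih =>
    have hlt : ∀ j ∈ i, ChalLegalAt κ θ' (coverSeq κ θ' N T) _ j := fun j hj =>
      (ih j hj (hi.mem hj) fun k hk => hN k (.inl (mem_of_mem_or_eq hi.isTransitive hk hj))).2
    have hmove := Classical.epsilon_spec (h.exists_isCoverMove hi (zcard_le_of_chalLegalAt hN)
      (hN i (.inr rfl)).2.1.1.1.le (S := restrLt (coverSeq κ θ' N T) i)
      (fun j hj => restrLt_of_mem hj ▸ (hlt j hj).2.2.1.1)
      (fun j hj => restrLt_of_mem hj ▸ (hlt j hj).2.1.1.1.le)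
      (restrLt (fun j => T j (restrLe (coverSeq κ θ' N T) j)) i))
    rw [← coverSeq_eq hi.isTransitive] at hmove
    refine ⟨hmove.1, hmove.2.congr (fun j hj => ?_) fun j hj => restrLt_of_mem hj⟩
    obtain hj | rfl := hj
    · rw [Function.update_of_ne (ne_of_mem_of_not_mem hj (mem_irrefl i)), restrLt_of_mem hj]
    · rw [Function.update_self]

end Cover

section Transfer

variable {κ γ θ θ' : ZFSet.{u}} {σ τ : ZFSet.{u} → (ZFSet.{u} → Set ZFSet.{u}) → Set ZFSet.{u}}

theorem coverSeq_restrLt {i : ZFSet.{u}} (hi : i.IsOrdinal) (Fs : ZFSet.{u} → Set ZFSet.{u}) :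
    coverSeq κ θ (fun b => σ b (restrLt (restrLt Fs i) b)) (fun b _ => restrLt Fs i b) i =
      coverSeq κ θ (fun b => σ b (restrLt Fs b)) (fun b _ => Fs b) i := by
  refine coverSeq_congr hi (fun j hj => congrArg (σ j) (restrLt_congr fun k hk => ?_))
    fun j hj => funext fun _ => restrLt_of_mem hj
  exact restrLt_of_mem (hj.elim (hi.mem_trans hk) (· ▸ hk))

theorem coverSeq_restrLe {i j : ZFSet.{u}} (hi : i.IsOrdinal) (hj : j ∈ i ∨ j = i)
    (Ms : ZFSet.{u} → Set ZFSet.{u}) :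
    coverSeq κ θ (restrLe Ms i) τ j = coverSeq κ θ Ms τ j := by
  have hj' : j.IsOrdinal := hj.elim hi.mem (· ▸ hi)
  exact coverSeq_congr hj'
    (fun k hk => restrLe_of_mem_or_eq (mem_or_eq_trans hi.isTransitive hk hj)) fun _ _ => rfl

theorem chalLegalAt_of_judgeLegalAt_cover {N N' Fs : ZFSet.{u} → Set ZFSet.{u}}
    (hκθ : κ ∈ HZ θ') (hγ : γ.IsOrdinal)
    (hN : ∀ i ∈ γ, (∀ j ∈ i, JudgeLegalAt κ N Fs j) → ChalLegalAt κ θ N Fs i)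
    (hcover : ∀ i ∈ γ, (∀ j, j ∈ i ∨ j = i → ChalLegalAt κ θ N Fs j) → N i ∩ HZ θ' ⊆ N' i)
    {i : ZFSet.{u}} (hi : i ∈ γ) (hjudge : ∀ j ∈ i, JudgeLegalAt κ N' Fs j) :
    ChalLegalAt κ θ N Fs i := by
  induction i using inductionOn with
  | h i ih =>
    have hi' := (hγ.mem hi).isTransitive
    have hbelow : ∀ j ∈ i, ChalLegalAt κ θ N Fs j := fun j hj =>
      ih j hj (hγ.mem_trans hj hi) fun k hk => hjudge k (hi'.mem_trans hk hj)
    exact hN i hi fun j hj => (hjudge j hj).mono hκθ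
      (hcover j (hγ.mem_trans hj hi) fun k hk => hbelow k (mem_of_mem_or_eq hi' hk hj))
      fun _ _ => rfl

theorem ChalWS.exists_of_isGameParam (hσ : ChalWS κ θ γ σ) (hγ : γ.IsOrdinal)
    (h : IsGameParam κ θ') : ∃ σ', ChalWS κ θ' γ σ' := by
  refine ⟨fun i F => coverSeq κ θ' (fun b => σ b (restrLt F b)) (fun b _ => F b) i, fun Fs => ?_⟩
  set N : ZFSet.{u} → Set ZFSet.{u} := fun b => σ b (restrLt Fs b)
  set N' : ZFSet.{u} → Set ZFSet.{u} := fun i =>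
    coverSeq κ θ' (fun b => σ b (restrLt (restrLt Fs i) b)) (fun b _ => restrLt Fs i b) i
  have hN' : ∀ i ∈ γ, coverSeq κ θ' N (fun b _ => Fs b) i = N' i := fun i hi =>
    (coverSeq_restrLt (hγ.mem hi) Fs).symm
  have hspec : ∀ i ∈ γ, (∀ j, j ∈ i ∨ j = i → ChalLegalAt κ θ N Fs j) →
      N i ∩ HZ θ' ⊆ N' i ∧ ChalLegalAt κ θ' N' Fs i := fun i hi hlegal => by
    have hspec := coverSeq_spec (T := fun b _ => Fs b) h (hγ.mem hi) hlegal
    rw [hN' i hi] at hspec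
    exact ⟨hspec.1, hspec.2.congr
      (fun j hj => hN' j (mem_of_mem_or_eq hγ.isTransitive hj hi)) fun _ _ => rfl⟩
  have hlegal : ∀ i ∈ γ, (∀ j ∈ i, JudgeLegalAt κ N' Fs j) →
      ∀ j, j ∈ i ∨ j = i → ChalLegalAt κ θ N Fs j := fun i hi hjudge j hj =>
    chalLegalAt_of_judgeLegalAt_cover h.mem_HZ hγ (hσ Fs).1 (fun k hk hl => (hspec k hk hl).1)
      (mem_of_mem_or_eq hγ.isTransitive hj hi)
      fun k hk => hjudge k (hj.elim ((hγ.mem hi).mem_trans hk) (· ▸ hk))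
  refine ⟨fun i hi hjudge => (hspec i hi (hlegal i hi hjudge)).2, fun hjudge hwins => ?_⟩
  have hcover : ∀ i ∈ γ, N i ∩ HZ θ' ⊆ N' i := fun i hi =>
    (hspec i hi (hlegal i hi fun j hj => hjudge j (hγ.mem_trans hj hi))).1
  exact (hσ Fs).2 (fun i hi => (hjudge i hi).mono h.mem_HZ (hcover i hi) fun _ _ => rfl)
    (hwins.mono h.aleph0_le_zcard h.mem_HZ hcover fun _ _ => rfl)

theorem JudgeWS.exists_of_isGameParam (hτ : JudgeWS κ θ γ τ) (hγ : γ.IsOrdinal)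
    (h : IsGameParam κ θ) (θ' : ZFSet.{u}) : ∃ τ', JudgeWS κ θ' γ τ' := by
  refine ⟨fun i M => τ i (restrLe (coverSeq κ θ M τ) i), fun Ms => ?_⟩
  set S := coverSeq κ θ Ms τ
  set F : ZFSet.{u} → Set ZFSet.{u} := fun i => τ i (restrLe (coverSeq κ θ (restrLe Ms i) τ) i)
  have hF : ∀ i ∈ γ, τ i (restrLe S i) = F i := fun i hi =>
    congrArg (τ i) (restrLe_congr fun j hj => (coverSeq_restrLe (hγ.mem hi) hj Ms).symm)
  have hspec : ∀ i ∈ γ, (∀ j, j ∈ i ∨ j = i → ChalLegalAt κ θ' Ms F j) →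
      Ms i ∩ HZ θ ⊆ S i ∧ ChalLegalAt κ θ S (fun b => τ b (restrLe S b)) i :=
    fun i hi => coverSeq_spec h (hγ.mem hi)
  refine ⟨fun i hi hchal => ?_, fun hchal => ?_⟩
  · have hi' := (hγ.mem hi).isTransitive
    have hle : ∀ j, j ∈ i ∨ j = i → j ∈ γ := fun j hj => mem_of_mem_or_eq hγ.isTransitive hj hi
    have hlegal : ∀ j, j ∈ i ∨ j = i → ChalLegalAt κ θ S (fun b => τ b (restrLe S b)) j :=
      fun j hj => (hspec j (hle j hj) fun k hk => hchal k (mem_or_eq_trans hi' hk hj)).2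
    exact ((hτ S).1 i hi hlegal).mono h.mem_HZ (hspec i hi hchal).1 fun j hj => hF j (hle j hj)
  · have hrun : ∀ i ∈ γ, _ := fun i hi =>
      hspec i hi fun j hj => hchal j (mem_of_mem_or_eq hγ.isTransitive hj hi)
    exact ((hτ S).2 fun i hi => (hrun i hi).2).mono h.aleph0_le_zcard h.mem_HZ
      (fun i hi => (hrun i hi).1) hF

end Transfer

theorem filter_game_theta_independent_general (κ γ θ₀ θ₁ : ZFSet.{u}) (hκ : IsCardZ κ)
    (hinf : Cardinal.aleph0 ≤ zcard κ) (hlt : (zcard κ) ^< (zcard κ) = zcard κ)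
    (hγ : γ.IsOrdinal) (h0 : IsRegCard θ₀) (h0κ : κ ∈ θ₀) (h1 : IsRegCard θ₁) (h1κ : κ ∈ θ₁) :
    ((∃ σ, ChalWS κ θ₀ γ σ) ↔ (∃ σ, ChalWS κ θ₁ γ σ)) ∧
    ((∃ τ, JudgeWS κ θ₀ γ τ) ↔ (∃ τ, JudgeWS κ θ₁ γ τ)) := by
  have hp₀ : IsGameParam κ θ₀ := ⟨hκ, hinf, hlt, h0, h0κ⟩
  have hp₁ : IsGameParam κ θ₁ := ⟨hκ, hinf, hlt, h1, h1κ⟩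
  exact ⟨⟨fun ⟨_, hσ⟩ => hσ.exists_of_isGameParam hγ hp₁,
      fun ⟨_, hσ⟩ => hσ.exists_of_isGameParam hγ hp₀⟩,
    ⟨fun ⟨_, hτ⟩ => hτ.exists_of_isGameParam hγ hp₀ θ₁,
      fun ⟨_, hτ⟩ => hτ.exists_of_isGameParam hγ hp₁ θ₀⟩⟩

/-- **Lemma 3.2** (Holy–Schlicht). For an uncountable cardinal `κ = κ^{<κ}`, an ordinal
`γ ≤ κ⁺` and regular cardinals `θ₀, θ₁ > κ`, the challenger has a winning strategy in
`G_γ^{θ₀}(κ)` iff he has one in `G_γ^{θ₁}(κ)`, and likewise for the judge.  Hence the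
(strategic) `γ`-filter property does not depend on the choice of `θ`. -/
theorem filter_game_theta_independent (κ γ θ₀ θ₁ : ZFSet.{u})
    (hκ : IsCardZ κ) (hunc : Cardinal.aleph0 < zcard κ)
    (hlt : (zcard κ) ^< (zcard κ) = zcard κ)
    (hγ : γ.IsOrdinal) (hγle : zcard γ ≤ Order.succ (zcard κ))
    (h0 : IsRegCard θ₀) (h0κ : κ ∈ θ₀)
    (h1 : IsRegCard θ₁) (h1κ : κ ∈ θ₁) :
    ((∃ σ, ChalWS κ θ₀ γ σ) ↔ (∃ σ, ChalWS κ θ₁ γ σ)) ∧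
    ((∃ τ, JudgeWS κ θ₀ γ τ) ↔ (∃ τ, JudgeWS κ θ₁ γ τ)) := by
  exact filter_game_theta_independent_general κ γ θ₀ θ₁ hκ hunc.le hlt hγ h0 h0κ h1 h1κ
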